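/- Let R be a regular language over the three-letter alphabet {□, b2, b1} (i.e., R is accepted by some deterministic finite automaton with finitely many states) such that R ⊆ {□^x b2 □^y b1 : x, y ∈ ℕ}. Then there exists an OCA C over the two-letter alphabet {b1, b2} such that L_vis(C) = {inc^{x+y} b1 dec^{y} b2 : x, y ∈ ℕ and □^x b2 □^y b1 ∈ R}. -/

import Mathlib

/-! Common framework: one-counter automata (OCAs) over a finite alphabet,
with the classical (`oca`), visibly (`vis`) and observability (`obs`) semantics. -/

/-- Letters from an alphabet `α` together with the two counter operations
`inc` and `dec`. -/
inductive Vis (α : Type*) : Type _ where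
  | sym : α → Vis α
  | inc : Vis α
  | dec : Vis α

/-- A one-counter automaton (an `m`-OCA) over alphabet `α` with state set `Q`:
an initial state, a set of final states, a threshold `m`, and a transition
relation `Δ ⊆ Q × {0,…,m} × (α ∪ {inc,dec}) × Q`. -/
structure OCA (Q : Type*) (α : Type*) where
  init : Q
  final : Set Q
  m : ℕ
  Δ : Set (Q × ℕ × Vis α × Q)
  valid : ∀ t ∈ Δ, t.2.1 ≤ m

variable {Q α : Type*}

/-- One step of an OCA, labeled by an element of `(α × ℕ) ∪ {inc, dec}`. -/
def OCA.step (A : OCA Q α) : Q × ℕ → Vis (α × ℕ) → Q × ℕ → Prop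
  | (q, x), Vis.inc, (q', x') => x' = x + 1 ∧ (q, min x A.m, Vis.inc, q') ∈ A.Δ
  | (q, x), Vis.dec, (q', x') => 1 ≤ x ∧ x' = x - 1 ∧ (q, min x A.m, Vis.dec, q') ∈ A.Δ
  | (q, x), Vis.sym (a, y), (q', x') => y = x ∧ x' = x ∧ (q, min x A.m, Vis.sym a, q') ∈ A.Δ

/-- `A.RunFrom c ts cs` holds if there is a partial run of `A` starting in
configuration `c`, with trace `ts`, visiting exactly the configurations
listed in `cs` (starting with `c`). -/
inductive OCA.RunFrom (A : OCA Q α) : Q × ℕ → List (Vis (α × ℕ)) → List (Q × ℕ) → Prop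
  | nil (c : Q × ℕ) : OCA.RunFrom A c [] [c]
  | cons {c c' : Q × ℕ} {τ : Vis (α × ℕ)} {ts : List (Vis (α × ℕ))} {cs : List (Q × ℕ)} :
      A.step c τ c' → OCA.RunFrom A c' ts cs → OCA.RunFrom A c (τ :: ts) (c :: cs)

/-- `ts` is the trace of some accepting run of `A` (a run starting in the
initial configuration `(ι,0)` whose last configuration has a final state). -/
def OCA.AccTrace (A : OCA Q α) (ts : List (Vis (α × ℕ))) : Prop :=
  ∃ cs c, A.RunFrom (A.init, 0) ts cs ∧ cs.getLast? = some c ∧ c.1 ∈ A.final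

/-- Projection of a trace letter used for the visibly semantics:
`(a,x)` becomes `a`, and `inc`/`dec` are kept. -/
def visOf : Vis (α × ℕ) → Vis α
  | Vis.sym (a, _) => Vis.sym a
  | Vis.inc => Vis.inc
  | Vis.dec => Vis.dec

/-- The visibly projection of a trace. -/
def visMap (ts : List (Vis (α × ℕ))) : List (Vis α) := ts.map visOf

/-- The observability projection of a trace: keep the pairs `(a,x)`,
erase `inc`/`dec`. -/
def obsMap (ts : List (Vis (α × ℕ))) : List (α × ℕ) :=
  ts.filterMap fun τ => match τ with
    | Vis.sym p => some p
    | _ => none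

/-- The classical projection of a trace: `(a,x)` becomes `a`,
`inc`/`dec` are erased. -/
def ocaMap (ts : List (Vis (α × ℕ))) : List α :=
  ts.filterMap fun τ => match τ with
    | Vis.sym (a, _) => some a
    | _ => none

/-- The visibly semantics `L_vis(A)`. -/
def OCA.Lvis (A : OCA Q α) : Set (List (Vis α)) :=
  {w | ∃ ts, A.AccTrace ts ∧ visMap ts = w}

/-- The observability semantics `L_obs(A)`. -/
def OCA.Lobs (A : OCA Q α) : Set (List (α × ℕ)) :=
  {w | ∃ ts, A.AccTrace ts ∧ obsMap ts = w}

/-- The classical semantics `L_oca(A)`. -/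
def OCA.Loca (A : OCA Q α) : Set (List α) :=
  {w | ∃ ts, A.AccTrace ts ∧ ocaMap ts = w}

/-- An OCA is deterministic if for every state `q`, counter test `k ≤ m` and
letter `σ ∈ α ∪ {inc,dec}` there is exactly one target state. -/
def OCA.Deterministic (A : OCA Q α) : Prop :=
  ∀ (q : Q) (k : ℕ) (σ : Vis α), k ≤ A.m → ∃! q' : Q, (q, k, σ, q') ∈ A.Δ

/-- Test for the letter `inc`. -/
def isIncB : Vis α → Bool
  | Vis.inc => true
  | _ => false

/-- Test for the letter `dec`. -/
def isDecB : Vis α → Bool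
  | Vis.dec => true
  | _ => false

/-- Well-formed words over `α ∪ {inc,dec}`: no prefix contains more `dec`'s
than `inc`'s. -/
def WFWords (α : Type*) : Set (List (Vis α)) :=
  {w | ∀ p, p <+: w → p.countP isDecB ≤ p.countP isIncB}

/-- `encFrom x0 w` encodes `w ∈ (α × ℕ)*` starting from previous counter
value `x0`: each `(a,x)` becomes `inc^(x-x0) a` (if `x ≥ x0`) or
`dec^(x0-x) a` (otherwise). -/
def encFrom : ℕ → List (α × ℕ) → List (Vis α)
  | _, [] => []
  | x0, (a, x) :: w =>
      (if x0 ≤ x then List.replicate (x - x0) Vis.inc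
       else List.replicate (x0 - x) Vis.dec) ++ Vis.sym a :: encFrom x w

/-- The encoding `enc : (α × ℕ)* → (α ∪ {inc,dec})*`. -/
def enc (w : List (α × ℕ)) : List (Vis α) := encFrom 0 w

/-- The set `Enc_α` of valid encodings. -/
def EncSet (α : Type*) : Set (List (Vis α)) := Set.range (enc (α := α))

/-- A set `S ⊆ ℕ` is ultimately periodic if there are `t` and `d ≥ 1` such
that for all `x ≥ t`, `x ∈ S ↔ x + d ∈ S`. -/
def UltPeriodic (S : Set ℕ) : Prop :=
  ∃ t d : ℕ, 1 ≤ d ∧ ∀ x : ℕ, t ≤ x → (x ∈ S ↔ x + d ∈ S)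

/-- An extended OCA (eOCA): transitions are guarded by ultimately periodic
sets of counter values, and acceptance is given by an ultimately periodic set
of counter values for each state. -/
structure EOCA (Q : Type*) (α : Type*) where
  init : Q
  f : Q → Set ℕ
  hf : ∀ q, UltPeriodic (f q)
  Δ : Set (Q × Set ℕ × Vis α × Q)
  hΔfin : Δ.Finite
  hΔup : ∀ t ∈ Δ, UltPeriodic t.2.1

/-- One step of an eOCA. -/
def EOCA.step (A : EOCA Q α) : Q × ℕ → Vis (α × ℕ) → Q × ℕ → Prop
  | (q, x), Vis.inc, (q', x') =>
      x' = x + 1 ∧ ∃ S, (q, S, Vis.inc, q') ∈ A.Δ ∧ x ∈ S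
  | (q, x), Vis.dec, (q', x') =>
      1 ≤ x ∧ x' = x - 1 ∧ ∃ S, (q, S, Vis.dec, q') ∈ A.Δ ∧ x ∈ S
  | (q, x), Vis.sym (a, y), (q', x') =>
      y = x ∧ x' = x ∧ ∃ S, (q, S, Vis.sym a, q') ∈ A.Δ ∧ x ∈ S

/-- Partial runs of an eOCA, as for OCAs. -/
inductive EOCA.RunFrom (A : EOCA Q α) : Q × ℕ → List (Vis (α × ℕ)) → List (Q × ℕ) → Prop
  | nil (c : Q × ℕ) : EOCA.RunFrom A c [] [c]
  | cons {c c' : Q × ℕ} {τ : Vis (α × ℕ)} {ts : List (Vis (α × ℕ))} {cs : List (Q × ℕ)} :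
      A.step c τ c' → EOCA.RunFrom A c' ts cs → EOCA.RunFrom A c (τ :: ts) (c :: cs)

/-- Accepting traces of an eOCA: the last configuration `(q,x)` satisfies
`x ∈ f q`. -/
def EOCA.AccTrace (A : EOCA Q α) (ts : List (Vis (α × ℕ))) : Prop :=
  ∃ cs c, A.RunFrom (A.init, 0) ts cs ∧ cs.getLast? = some c ∧ c.2 ∈ A.f c.1

/-- The visibly semantics of an eOCA. -/
def EOCA.Lvis (A : EOCA Q α) : Set (List (Vis α)) :=
  {w | ∃ ts, A.AccTrace ts ∧ visMap ts = w}

/-- The observability semantics of an eOCA. -/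
def EOCA.Lobs (A : EOCA Q α) : Set (List (α × ℕ)) :=
  {w | ∃ ts, A.AccTrace ts ∧ obsMap ts = w}

/-- The classical semantics of an eOCA. -/
def EOCA.Loca (A : EOCA Q α) : Set (List α) :=
  {w | ∃ ts, A.AccTrace ts ∧ ocaMap ts = w}

/-! On `inc^(x+y) b₁ dec^y b₂`, an automaton learns `y` from the decrements and finds `x` left in
the counter. Fix a DFA for `R`. The run carries the *set* of DFA states from which `□^y b₁` is
accepted, pulled back along `□` at each decrement, and at `b₂` it tests whether the DFA state
reached by `□^x b₂` lies in this set. The values `x` that pass form an ultimately periodic set, so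
an extended OCA can do this; and an OCA simulates an extended OCA by keeping in its state the
counter value modulo a common period and truncated at a common threshold. -/

section UltimatelyPeriodic

/-- `S` is periodic with period `d` on `[t, ∞)`: ultimate periodicity with explicit parameters, so
that they can be shared by finitely many sets. -/
def PeriodicFrom (t d : ℕ) (S : Set ℕ) : Prop :=
  ∀ x, t ≤ x → (x ∈ S ↔ x + d ∈ S)

variable {t t' d d' : ℕ} {S : Set ℕ}

theorem PeriodicFrom.mono (hS : PeriodicFrom t d S) (htt' : t ≤ t') : PeriodicFrom t' d S :=
  fun x hx => hS x (htt'.trans hx)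

theorem PeriodicFrom.mul_right (hS : PeriodicFrom t d S) (k : ℕ) : PeriodicFrom t (d * k) S := by
  intro x hx
  induction k with
  | zero => simp
  | succ k ih => rw [ih, hS (x + d * k) (by omega), Nat.mul_succ, Nat.add_assoc]

theorem PeriodicFrom.mul_left (hS : PeriodicFrom t d S) (k : ℕ) : PeriodicFrom t (k * d) S :=
  Nat.mul_comm d k ▸ hS.mul_right k

theorem PeriodicFrom.mem_iff_mem {x y : ℕ} (hS : PeriodicFrom t d S)
    (hmin : min x t = min y t) (hmod : x ≡ y [MOD d]) : x ∈ S ↔ y ∈ S := by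
  wlog hxy : x ≤ y generalizing x y
  · exact (this hmin.symm hmod.symm (by omega)).symm
  rcases lt_or_ge x t with hxt | hxt
  · rw [show x = y by omega]
  · obtain ⟨k, hk⟩ := (Nat.modEq_iff_dvd' hxy).1 hmod
    rw [hS.mul_right k x hxt, ← hk, Nat.add_sub_cancel' hxy]

theorem exists_forall_periodicFrom {C : Set (Set ℕ)} (hC : C.Finite)
    (hper : ∀ S ∈ C, UltPeriodic S) : ∃ t d : ℕ, d ≠ 0 ∧ ∀ S ∈ C, PeriodicFrom t d S := by
  induction C, hC using Set.Finite.induction_on with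
  | empty => exact ⟨0, 1, one_ne_zero, by simp⟩
  | @insert S C _ _ ih =>
    rw [Set.forall_mem_insert] at hper
    obtain ⟨t, d, hd, hS⟩ := hper.1
    obtain ⟨t', d', hd', hperC⟩ := ih hper.2
    refine ⟨max t t', d * d', mul_ne_zero (by omega) hd', Set.forall_mem_insert.2 ⟨?_, ?_⟩⟩
    · exact (PeriodicFrom.mul_right hS d').mono (le_max_left t t')
    · exact fun S' hS' => ((hperC S' hS').mul_left d).mono (le_max_right t t')

theorem ultPeriodic_univ : UltPeriodic Set.univ :=
  ⟨0, 1, le_rfl, by simp⟩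

theorem ultPeriodic_setOf_iterate_mem {σ : Type*} [Finite σ] (f : σ → σ) (s : σ) (P : Set σ) :
    UltPeriodic {x | f^[x] s ∈ P} := by
  obtain ⟨i, j, hne, heq⟩ := Finite.exists_ne_map_eq_of_infinite (fun n : ℕ => f^[n] s)
  wlog hij : i < j generalizing i j
  · exact this j i hne.symm heq.symm (by omega)
  refine ⟨i, j - i, by omega, fun x hx => ?_⟩
  have hshift : f^[x + (j - i)] s = f^[x] s := by
    rw [show x + (j - i) = (x - i) + j by omega, Function.iterate_add_apply, ← heq,
      ← Function.iterate_add_apply, Nat.sub_add_cancel hx]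
  simp only [Set.mem_ofPred_eq, hshift]

end UltimatelyPeriodic

/-- The effect of a trace letter on the counter, independently of any automaton. The decrement is
written `x = x' + 1` so that it excludes `x = 0`. -/
def CounterStep : ℕ → Vis (α × ℕ) → ℕ → Prop
  | x, Vis.inc, x' => x' = x + 1
  | x, Vis.dec, x' => x = x' + 1
  | x, Vis.sym (_, y), x' => y = x ∧ x' = x

theorem OCA.step_iff (A : OCA Q α) {q q' : Q} {x x' : ℕ} {τ : Vis (α × ℕ)} :
    A.step (q, x) τ (q', x') ↔ CounterStep x τ x' ∧ (q, min x A.m, visOf τ, q') ∈ A.Δ := by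
  rcases τ with ⟨a, y⟩ | _ | _
  · simp only [OCA.step, CounterStep, visOf, and_assoc]
  · simp only [OCA.step, CounterStep, visOf]
  · simp only [OCA.step, CounterStep, visOf, ← and_assoc]
    exact and_congr_left' (by omega)

theorem EOCA.step_iff (A : EOCA Q α) {q q' : Q} {x x' : ℕ} {τ : Vis (α × ℕ)} :
    A.step (q, x) τ (q', x') ↔
      CounterStep x τ x' ∧ ∃ S, (q, S, visOf τ, q') ∈ A.Δ ∧ x ∈ S := by
  rcases τ with ⟨a, y⟩ | _ | _
  · simp only [EOCA.step, CounterStep, visOf, and_assoc]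
  · simp only [EOCA.step, CounterStep, visOf]
  · simp only [EOCA.step, CounterStep, visOf, ← and_assoc]
    exact and_congr_left' (by omega)

section CounterClass

/-- The classes of counter values that no set satisfying `PeriodicFrom t d` can separate: a value
truncated at `t`, and a residue modulo `d`. -/
abbrev CounterClass (t d : ℕ) : Type :=
  Fin (t + 1) × ZMod d

/-- The class of a counter value. -/
def counterClass (t d x : ℕ) : CounterClass t d :=
  (⟨min x t, by omega⟩, x)

variable {t d x x' y y' : ℕ} {τ τ' : Vis (α × ℕ)}

theorem counterClass_eq_iff :
    counterClass t d x = counterClass t d y ↔ min x t = min y t ∧ x ≡ y [MOD d] := by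
  simp [counterClass, ZMod.natCast_eq_natCast_iff]

theorem PeriodicFrom.mem_iff_of_counterClass_eq {S : Set ℕ} (hS : PeriodicFrom t d S)
    (h : counterClass t d x = counterClass t d y) : x ∈ S ↔ y ∈ S :=
  have ⟨hmin, hmod⟩ := counterClass_eq_iff.1 h
  hS.mem_iff_mem hmin hmod

-- The class alone does not determine the class after a decrement: from `min x t = t` one cannot
-- tell whether `min (x - 1) t` is `t` or `t - 1`. The test against `t + 1` settles this.
theorem CounterStep.counterClass_eq (hx : CounterStep x τ x') (hy : CounterStep y τ' y')
    (hτ : visOf τ = visOf τ') (h : counterClass t d x = counterClass t d y)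
    (htest : min x (t + 1) = min y (t + 1)) : counterClass t d x' = counterClass t d y' := by
  rw [counterClass_eq_iff] at h ⊢
  obtain ⟨-, hmod⟩ := h
  rcases τ with ⟨a, k⟩ | _ | _ <;> rcases τ' with ⟨b, l⟩ | _ | _ <;>
    simp only [visOf, reduceCtorEq] at hτ <;> simp only [CounterStep] at hx hy
  · obtain ⟨⟨-, rfl⟩, -, rfl⟩ := hx, hy
    exact ⟨by omega, hmod⟩
  · subst hx hy
    exact ⟨by omega, hmod.add_right 1⟩
  · subst hx hy
    exact ⟨by omega, hmod.add_right_cancel' 1⟩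

end CounterClass

namespace EOCA

section Simulation

universe u

/-- The OCA that simulates `A` with the class of the counter value in its state. Its transitions
are the images of the steps of `A`. -/
def toOCA (A : EOCA Q α) (t d : ℕ) : OCA (Q × CounterClass t d) α where
  init := (A.init, counterClass t d 0)
  final := {p | ∃ x ∈ A.f p.1, counterClass t d x = p.2}
  m := t + 1
  Δ := {z | ∃ q x τ q' x', A.step (q, x) τ (q', x') ∧
    z = ((q, counterClass t d x), min x (t + 1), visOf τ, (q', counterClass t d x'))}
  valid := by
    rintro _ ⟨q, x, τ, q', x', -, rfl⟩
    exact min_le_right x (t + 1)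

/-- The configuration of `A.toOCA t d` that corresponds to a configuration of `A`. -/
def liftConfig (t d : ℕ) (c : Q × ℕ) : (Q × CounterClass t d) × ℕ :=
  ((c.1, counterClass t d c.2), c.2)

variable {A : EOCA Q α} {t d : ℕ}

theorem toOCA_step_liftConfig_iff (hΔ : ∀ z ∈ A.Δ, PeriodicFrom t d z.2.1) {c : Q × ℕ}
    {τ : Vis (α × ℕ)} {p : (Q × CounterClass t d) × ℕ} :
    (A.toOCA t d).step (liftConfig t d c) τ p ↔ ∃ c', A.step c τ c' ∧ liftConfig t d c' = p := by
  obtain ⟨q, x⟩ := c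
  obtain ⟨p, x'⟩ := p
  simp only [liftConfig, OCA.step_iff]
  constructor
  · rintro ⟨hx, r, y, τ', r', y', hstep, hz⟩
    obtain ⟨hy, S, hS, hyS⟩ := A.step_iff.1 hstep
    simp only [toOCA, Prod.mk.injEq] at hz
    obtain ⟨⟨rfl, hclass⟩, htest, hτ, rfl⟩ := hz
    have hxS : x ∈ S := ((hΔ _ hS).mem_iff_of_counterClass_eq hclass).2 hyS
    refine ⟨(r', x'), A.step_iff.2 ⟨hx, S, hτ ▸ hS, hxS⟩, ?_⟩
    rw [hx.counterClass_eq hy hτ hclass htest]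
  · rintro ⟨⟨q', y⟩, hstep, hp⟩
    obtain ⟨rfl, rfl⟩ := Prod.mk.inj hp
    exact ⟨(A.step_iff.1 hstep).1, q, x, τ, q', y, hstep, rfl⟩

theorem toOCA_runFrom_liftConfig_iff (hΔ : ∀ z ∈ A.Δ, PeriodicFrom t d z.2.1) {c : Q × ℕ}
    {ts : List (Vis (α × ℕ))} {ps : List ((Q × CounterClass t d) × ℕ)} :
    (A.toOCA t d).RunFrom (liftConfig t d c) ts ps ↔
      ∃ cs, A.RunFrom c ts cs ∧ cs.map (liftConfig t d) = ps := by
  constructor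
  · intro hrun
    generalize hp : liftConfig t d c = p at hrun
    induction hrun generalizing c with
    | nil => exact ⟨[c], .nil c, by simp [hp]⟩
    | cons hstep _ ih =>
      obtain ⟨c', hstep', hc'⟩ := (toOCA_step_liftConfig_iff hΔ).1 (hp ▸ hstep)
      obtain ⟨cs, hrun, rfl⟩ := ih hc'
      exact ⟨c :: cs, .cons hstep' hrun, by simp [hp]⟩
  · rintro ⟨cs, hrun, rfl⟩
    induction hrun with
    | nil c => exact .nil _
    | cons hstep _ ih => exact .cons ((toOCA_step_liftConfig_iff hΔ).2 ⟨_, hstep, rfl⟩) ih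

theorem toOCA_accTrace_iff (hΔ : ∀ z ∈ A.Δ, PeriodicFrom t d z.2.1)
    (hf : ∀ q, PeriodicFrom t d (A.f q)) {ts : List (Vis (α × ℕ))} :
    (A.toOCA t d).AccTrace ts ↔ A.AccTrace ts := by
  have hfinal (c : Q × ℕ) : (liftConfig t d c).1 ∈ (A.toOCA t d).final ↔ c.2 ∈ A.f c.1 :=
    ⟨fun ⟨_, hx, hclass⟩ => ((hf c.1).mem_iff_of_counterClass_eq hclass).1 hx,
      fun hc => ⟨c.2, hc, rfl⟩⟩
  constructor
  · rintro ⟨ps, p, hrun, hlast, hp⟩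
    obtain ⟨cs, hrun', rfl⟩ := (toOCA_runFrom_liftConfig_iff (c := (A.init, 0)) hΔ).1 hrun
    rw [List.getLast?_map, Option.map_eq_some_iff] at hlast
    obtain ⟨c, hlast, rfl⟩ := hlast
    exact ⟨cs, c, hrun', hlast, (hfinal c).1 hp⟩
  · rintro ⟨cs, c, hrun, hlast, hc⟩
    refine ⟨cs.map (liftConfig t d), liftConfig t d c, ?_, ?_, (hfinal c).2 hc⟩
    · exact (toOCA_runFrom_liftConfig_iff hΔ).2 ⟨cs, hrun, rfl⟩
    · rw [List.getLast?_map, hlast, Option.map_some]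

theorem exists_oca_accTrace_eq {Q : Type u} [Finite Q] (A : EOCA Q α) :
    ∃ (Q' : Type u) (_ : Fintype Q') (C : OCA Q' α), C.AccTrace = A.AccTrace := by
  obtain ⟨t, d, hd, hper⟩ := exists_forall_periodicFrom
    (C := (fun z => z.2.1) '' A.Δ ∪ Set.range A.f)
    ((A.hΔfin.image _).union (Set.finite_range A.f))
    (by
      rintro _ (⟨z, hz, rfl⟩ | ⟨q, rfl⟩)
      exacts [A.hΔup z hz, A.hf q])
  have : NeZero d := ⟨hd⟩
  refine ⟨Q × CounterClass t d, Fintype.ofFinite _, A.toOCA t d, ?_⟩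
  ext ts
  exact toOCA_accTrace_iff (fun z hz => hper _ (.inl ⟨z, hz, rfl⟩))
    (fun q => hper _ (.inr ⟨q, rfl⟩))

end Simulation

section LvisFrom

/-- The visibly semantics of `A` with the initial configuration replaced by `c`; it can be
computed letter by letter. -/
def LvisFrom (A : EOCA Q α) (c : Q × ℕ) : Set (List (Vis α)) :=
  {w | ∃ ts cs c', A.RunFrom c ts cs ∧ cs.getLast? = some c' ∧ c'.2 ∈ A.f c'.1 ∧ visMap ts = w}

variable {A : EOCA Q α} {q : Q} {x : ℕ} {w : List (Vis α)}

theorem lvis_eq_lvisFrom (A : EOCA Q α) : A.Lvis = A.LvisFrom (A.init, 0) := by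
  ext w
  simp only [Lvis, LvisFrom, AccTrace, Set.mem_ofPred_eq, and_assoc, ← exists_and_right]

theorem nil_mem_lvisFrom {c : Q × ℕ} : [] ∈ A.LvisFrom c ↔ c.2 ∈ A.f c.1 := by
  constructor
  · rintro ⟨ts, cs, c', hrun, hlast, hc', hw⟩
    obtain rfl := List.map_eq_nil_iff.1 hw
    cases hrun
    obtain rfl := Option.some.inj hlast
    exact hc'
  · exact fun hc => ⟨[], [c], c, .nil c, rfl, hc, rfl⟩

theorem RunFrom.getLast?_cons {c c' : Q × ℕ} {ts : List (Vis (α × ℕ))} {cs : List (Q × ℕ)}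
    (hrun : A.RunFrom c ts cs) : (c' :: cs).getLast? = cs.getLast? := by
  cases hrun <;> simp

theorem cons_mem_lvisFrom {c : Q × ℕ} {σ : Vis α} :
    σ :: w ∈ A.LvisFrom c ↔ ∃ τ c', visOf τ = σ ∧ A.step c τ c' ∧ w ∈ A.LvisFrom c' := by
  constructor
  · rintro ⟨ts, cs, c', hrun, hlast, hc', hw⟩
    obtain ⟨τ, ts, rfl, hτ, rfl⟩ := List.map_eq_cons_iff.1 hw
    cases hrun with
    | cons hstep hrun =>
      exact ⟨τ, _, hτ, hstep, ts, _, c', hrun, hrun.getLast?_cons ▸ hlast, hc', rfl⟩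
  · rintro ⟨τ, c₁, rfl, hstep, ts, cs, c', hrun, hlast, hc', rfl⟩
    exact ⟨τ :: ts, c :: cs, c', .cons hstep hrun, hrun.getLast?_cons.trans hlast, hc', rfl⟩

theorem inc_cons_mem_lvisFrom : Vis.inc :: w ∈ A.LvisFrom (q, x) ↔
    ∃ q' S, (q, S, Vis.inc, q') ∈ A.Δ ∧ x ∈ S ∧ w ∈ A.LvisFrom (q', x + 1) := by
  rw [cons_mem_lvisFrom]
  constructor
  · rintro ⟨_ | _ | _, ⟨q', _⟩, ⟨⟩, ⟨rfl, S, hS, hx⟩, hw⟩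
    exact ⟨q', S, hS, hx, hw⟩
  · rintro ⟨q', S, hS, hx, hw⟩
    exact ⟨.inc, (q', x + 1), rfl, ⟨rfl, S, hS, hx⟩, hw⟩

theorem dec_cons_mem_lvisFrom : Vis.dec :: w ∈ A.LvisFrom (q, x) ↔
    ∃ q' x' S, x = x' + 1 ∧ (q, S, Vis.dec, q') ∈ A.Δ ∧ x ∈ S ∧ w ∈ A.LvisFrom (q', x') := by
  rw [cons_mem_lvisFrom]
  constructor
  · rintro ⟨_ | _ | _, ⟨q', x'⟩, ⟨⟩, hstep, hw⟩
    obtain ⟨rfl, S, hS, hx⟩ := A.step_iff.1 hstep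
    exact ⟨q', x', S, rfl, hS, hx, hw⟩
  · rintro ⟨q', x', S, rfl, hS, hx, hw⟩
    exact ⟨.dec, (q', x'), rfl, A.step_iff.2 ⟨rfl, S, hS, hx⟩, hw⟩

theorem sym_cons_mem_lvisFrom {a : α} : Vis.sym a :: w ∈ A.LvisFrom (q, x) ↔
    ∃ q' S, (q, S, Vis.sym a, q') ∈ A.Δ ∧ x ∈ S ∧ w ∈ A.LvisFrom (q', x) := by
  rw [cons_mem_lvisFrom]
  constructor
  · rintro ⟨⟨_, _⟩ | _ | _, ⟨q', _⟩, ⟨⟩, ⟨rfl, rfl, S, hS, hx⟩, hw⟩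
    exact ⟨q', S, hS, hx, hw⟩
  · rintro ⟨q', S, hS, hx, hw⟩
    exact ⟨.sym (a, x), (q', x), rfl, ⟨rfl, rfl, S, hS, hx⟩, hw⟩

end LvisFrom

end EOCA

section IncDec

/-- The states of `incDecEOCA`: the increment phase, the decrement phase with a value in `T`
that is updated at each decrement, and the end. -/
inductive IncDecState (T : Type*) where
  | inc : IncDecState T
  | dec : T → IncDecState T
  | done : IncDecState T

instance {T : Type*} [Finite T] : Finite (IncDecState T) := by
  refine Finite.of_surjective
    (fun s : Option (Option T) => s.elim IncDecState.inc (·.elim .done .dec)) ?_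
  rintro (_ | h | _)
  exacts [⟨none, rfl⟩, ⟨some (some h), rfl⟩, ⟨some none, rfl⟩]

variable {T : Type*} [Finite T]

/-- An eOCA for the words `inc^n a dec^y b` such that the final counter value `n - y` lies in
`G (g^[y] h₀)`. -/
def incDecEOCA (g : T → T) (h₀ : T) (G : T → Set ℕ) (hG : ∀ h, UltPeriodic (G h)) (a b : α) :
    EOCA (IncDecState T) α where
  init := .inc
  f q := {_x | q = .done}
  hf _ := ⟨0, 1, le_rfl, fun _ _ => Iff.rfl⟩
  Δ := {(.inc, Set.univ, .inc, .inc), (.inc, Set.univ, .sym a, .dec h₀)} ∪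
    (Set.range (fun h => (.dec h, Set.univ, .dec, .dec (g h))) ∪
      Set.range (fun h => (.dec h, G h, .sym b, .done)))
  hΔfin := Set.toFinite _
  hΔup := by
    rintro _ ((rfl | rfl) | ⟨h, rfl⟩ | ⟨h, rfl⟩)
    exacts [ultPeriodic_univ, ultPeriodic_univ, ultPeriodic_univ, hG h]

variable {g : T → T} {h h₀ : T} {G : T → Set ℕ} {hG : ∀ h, UltPeriodic (G h)} {a b : α}
  {x : ℕ} {w : List (Vis α)}

theorem mem_Δ_inc_incDecEOCA {S : Set ℕ} {σ : Vis α} {q : IncDecState T} :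
    (.inc, S, σ, q) ∈ (incDecEOCA g h₀ G hG a b).Δ ↔
      S = Set.univ ∧ (σ = .inc ∧ q = .inc ∨ σ = .sym a ∧ q = .dec h₀) := by
  simp [incDecEOCA, ← and_or_left]

theorem mem_Δ_dec_incDecEOCA {S : Set ℕ} {σ : Vis α} {q : IncDecState T} :
    (.dec h, S, σ, q) ∈ (incDecEOCA g h₀ G hG a b).Δ ↔
      S = Set.univ ∧ σ = .dec ∧ q = .dec (g h) ∨ S = G h ∧ σ = .sym b ∧ q = .done := by
  simp [incDecEOCA, eq_comm]

theorem notMem_Δ_done_incDecEOCA {S : Set ℕ} {σ : Vis α} {q : IncDecState T} :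
    (.done, S, σ, q) ∉ (incDecEOCA g h₀ G hG a b).Δ := by
  simp [incDecEOCA]

theorem mem_lvisFrom_done_incDecEOCA :
    w ∈ (incDecEOCA g h₀ G hG a b).LvisFrom (.done, x) ↔ w = [] := by
  rcases w with _ | ⟨_ | _ | _, w⟩
  · simp [EOCA.nil_mem_lvisFrom, incDecEOCA]
  · simp [EOCA.sym_cons_mem_lvisFrom, notMem_Δ_done_incDecEOCA]
  · simp [EOCA.inc_cons_mem_lvisFrom, notMem_Δ_done_incDecEOCA]
  · simp [EOCA.dec_cons_mem_lvisFrom, notMem_Δ_done_incDecEOCA]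

theorem mem_lvisFrom_dec_incDecEOCA :
    w ∈ (incDecEOCA g h₀ G hG a b).LvisFrom (.dec h, x) ↔
      ∃ y z, x = z + y ∧ z ∈ G (g^[y] h) ∧ w = List.replicate y Vis.dec ++ [Vis.sym b] := by
  induction w generalizing x h with
  | nil => simp [EOCA.nil_mem_lvisFrom, incDecEOCA]
  | cons σ w ih =>
    rw [← Nat.or_exists_add_one]
    rcases σ with c | _ | _
    · simp [EOCA.sym_cons_mem_lvisFrom, mem_Δ_dec_incDecEOCA, mem_lvisFrom_done_incDecEOCA,
        List.replicate_succ, and_left_comm]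
    · simp [EOCA.inc_cons_mem_lvisFrom, mem_Δ_dec_incDecEOCA, List.replicate_succ]
    · simp [EOCA.dec_cons_mem_lvisFrom, mem_Δ_dec_incDecEOCA, ih, List.replicate_succ,
        Nat.add_assoc]

theorem mem_lvisFrom_inc_incDecEOCA :
    w ∈ (incDecEOCA g h₀ G hG a b).LvisFrom (.inc, x) ↔
      ∃ n y z, x + n = z + y ∧ z ∈ G (g^[y] h₀) ∧ w = List.replicate n Vis.inc ++ Vis.sym a ::
        (List.replicate y Vis.dec ++ [Vis.sym b]) := by
  induction w generalizing x with
  | nil => simp [EOCA.nil_mem_lvisFrom, incDecEOCA]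
  | cons σ w ih =>
    rw [← Nat.or_exists_add_one]
    rcases σ with c | _ | _
    · simp [EOCA.sym_cons_mem_lvisFrom, mem_Δ_inc_incDecEOCA, mem_lvisFrom_dec_incDecEOCA,
        List.replicate_succ, and_left_comm]
    · simp [EOCA.inc_cons_mem_lvisFrom, mem_Δ_inc_incDecEOCA, ih, List.replicate_succ,
        Nat.add_assoc, Nat.add_comm 1]
    · simp [EOCA.dec_cons_mem_lvisFrom, mem_Δ_inc_incDecEOCA, List.replicate_succ]

theorem lvis_incDecEOCA : (incDecEOCA g h₀ G hG a b).Lvis =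
    {w | ∃ x y, x ∈ G (g^[y] h₀) ∧ w = List.replicate (x + y) Vis.inc ++ Vis.sym a ::
      (List.replicate y Vis.dec ++ [Vis.sym b])} := by
  ext w
  rw [EOCA.lvis_eq_lvisFrom]
  refine mem_lvisFrom_inc_incDecEOCA.trans ⟨?_, ?_⟩
  · rintro ⟨n, y, x, hn, hx, rfl⟩
    exact ⟨x, y, hx, by rw [← hn, Nat.zero_add]⟩
  · rintro ⟨x, y, hx, rfl⟩
    exact ⟨x + y, y, x, Nat.zero_add _, hx, rfl⟩

end IncDec

theorem evalFrom_replicate {σ : Type*} (M : DFA α σ) (s : σ) (a : α) (n : ℕ) :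
    M.evalFrom s (List.replicate n a) = (M.step · a)^[n] s := by
  induction n generalizing s with
  | zero => rfl
  | succ _ ih => exact ih _

theorem stmt19_general {β : Type*} {R : Language α} (hR : R.IsRegular) (box c₂ c₁ : α)
    (b₁ b₂ : β) :
    ∃ (Q : Type) (_ : Fintype Q) (C : OCA Q β),
      C.Lvis = {w | ∃ x y : ℕ,
        List.replicate x box ++ [c₂] ++ List.replicate y box ++ [c₁] ∈ R ∧
        w = List.replicate (x + y) Vis.inc ++ Vis.sym b₁ ::
            (List.replicate y Vis.dec ++ [Vis.sym b₂])} := by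
  obtain ⟨σ, _, M, rfl⟩ := hR
  let f : σ → σ := (M.step · box)
  let last : Set σ := {s | M.step s c₁ ∈ M.accept}
  have hmem (x y : ℕ) :
      List.replicate x box ++ [c₂] ++ List.replicate y box ++ [c₁] ∈ M.accepts ↔
        M.step (f^[x] M.start) c₂ ∈ (Set.preimage f)^[y] last := by
    simp [f, last, ← Set.preimage_iterate_eq, DFA.mem_accepts, DFA.eval, DFA.evalFrom_of_append,
      evalFrom_replicate]
  have hper (P : Set σ) : UltPeriodic {x | M.step (f^[x] M.start) c₂ ∈ P} :=
    ultPeriodic_setOf_iterate_mem f M.start ((M.step · c₂) ⁻¹' P)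
  obtain ⟨Q, hQ, C, hC⟩ :=
    (incDecEOCA (Set.preimage f) last _ hper b₁ b₂).exists_oca_accTrace_eq
  refine ⟨Q, hQ, C, ?_⟩
  simp only [OCA.Lvis, hC, hmem]
  exact lvis_incDecEOCA

/-- from a regular language `R ⊆ {□^x b2 □^y b1}` (over the
three-letter alphabet `Fin 3`, with `□ := 0`, `b2 := 1`, `b1 := 2`) one
obtains an OCA over the two-letter alphabet `Bool` (with `b1 := true`,
`b2 := false`) whose visibly semantics is
`{inc^(x+y) b1 dec^y b2 : □^x b2 □^y b1 ∈ R}`. -/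
theorem stmt19 (R : Language (Fin 3))
    (hreg : ∃ (S : Type) (_ : Fintype S) (M : DFA (Fin 3) S), M.accepts = R)
    (hR : ∀ w ∈ R, ∃ x y : ℕ,
        w = List.replicate x (0 : Fin 3) ++ [1] ++ List.replicate y 0 ++ [2]) :
    ∃ (Q : Type) (_ : Fintype Q) (C : OCA Q Bool),
      C.Lvis = {w | ∃ x y : ℕ,
        (List.replicate x (0 : Fin 3) ++ [1] ++ List.replicate y 0 ++ [2]) ∈ R ∧
        w = List.replicate (x + y) Vis.inc ++ Vis.sym true ::
            (List.replicate y Vis.dec ++ [Vis.sym false])} := by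
  exact stmt19_general hreg 0 1 2 true false
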